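/- Let d ≥ 1, 0 < α ≤ 2, r_0 > 1 and x ∈ ℝ^d with |x| ≥ r_0 + 1. Let a(x) ≥ 0 be a real number, b(x) ∈ ℝ^d, c(x) a symmetric real d×d matrix, and ν_x a Borel measure on ℝ^d with ν_x({0}) = 0, ν_x(B^c(0,1)) < ∞, ∫_{B(0,1)} |y|² ν_x(dy) < ∞, and such that y ↦ (max(|y+x|, r_0))^α is ν_x-integrable on B^c(0,1). Let v̄ : ℝ^d → ℝ be twice continuously differentiable, of the form v̄(z) = g(|z|) for some nondecreasing g : [0,∞) → ℝ, and satisfying v̄(z) = |z|^α whenever |z| ≥ r_0. Then the function y ↦ v̄(x+y) − v̄(x) − ⟨y, ∇v̄(x)⟩ 1_{B(0,1)}(y) is ν_x-integrable and ℒv̄(x) ≤ −a(x)|x|^α + α|x|^α (A(x) − (1 − α/2) C(x) + B(x)) + (α/2)(|x|−1)^{α−2} ∫_{B(0,1)} |y|² ν_x(dy) + ∫_{B^c(0,1)} ((max(|y+x|, r_0))^α − |x|^α) ν_x(dy). -/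

import Mathlib

open MeasureTheory Real
open scoped RealInnerProductSpace

/-- The integro-differential operator ℒ of the paper (evaluated at a single point `x`,
with frozen coefficients `a`, `b`, `c` and Lévy measure `ν` at that point), applied to a
twice continuously differentiable function `f`. -/
noncomputable def genL (d : ℕ) (a : ℝ) (b : EuclideanSpace ℝ (Fin d))
    (c : Matrix (Fin d) (Fin d) ℝ) (ν : Measure (EuclideanSpace ℝ (Fin d)))
    (f : EuclideanSpace ℝ (Fin d) → ℝ) (x : EuclideanSpace ℝ (Fin d)) : ℝ :=
  -a * f x + ⟪b, gradient f x⟫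
    + (1 / 2) * ∑ i, ∑ j, c i j *
        iteratedFDeriv ℝ 2 f x ![EuclideanSpace.single i 1, EuclideanSpace.single j 1]
    + ∫ y, (f (x + y) - f x
        - Set.indicator (Metric.ball (0 : EuclideanSpace ℝ (Fin d)) 1)
            (fun y => ⟪y, gradient f x⟫) y) ∂ν

/-!
Where `v = ‖·‖ ^ α`, the local part of `ℒ v x` is explicit. For the small jumps, write
`‖x + y‖ ^ α = ‖x‖ ^ α * (1 + w) ^ (α / 2)` with `w = (2 * ⟪x, y⟫ + ‖y‖ ^ 2) / ‖x‖ ^ 2`. As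
`α / 2 ≤ 1`, Bernoulli's inequality bounds the power by its tangent `1 + (α / 2) * w`: the part of
`w` linear in `y` is the compensator, and the part quadratic in `y` gives the small-jump integral.
Large jumps are not compensated and only need `v z ≤ max ‖z‖ r0 ^ α`. Integrability follows from
lower bounds: a quadratic reverse of Bernoulli's inequality for small jumps, boundedness below of
`v` for large ones.
-/

open Filter Topology

lemma one_add_mul_sub_mul_sq_le_one_add_rpow {p w : ℝ} (hw : -1 ≤ w) (hp₀ : 0 ≤ p)
    (hp₁ : p ≤ 1) :
    1 + p * w - (1 - p) * w ^ 2 ≤ (1 + w) ^ p := by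
  rcases hw.eq_or_lt with rfl | hw
  · have : (0 : ℝ) ≤ (1 + -1) ^ p := by positivity
    linarith
  have hpos : 0 < 1 + w := by linarith
  have hbernoulli : (1 + w) ^ (1 - p) ≤ 1 + (1 - p) * w :=
    rpow_one_add_le_one_add_mul_self hw.le (by linarith) (by linarith)
  have hden : 0 < 1 + (1 - p) * w := (rpow_pos_of_pos hpos _).trans_le hbernoulli
  calc 1 + p * w - (1 - p) * w ^ 2
      ≤ (1 + w) / (1 + (1 - p) * w) := by
        rw [le_div_iff₀ hden]
        nlinarith [mul_nonneg (sq_nonneg ((1 - p) * w)) hpos.le]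
    _ ≤ (1 + w) / (1 + w) ^ (1 - p) := by gcongr
    _ = (1 + w) ^ p := by
        rw [rpow_sub hpos, rpow_one, div_div_cancel₀ hpos.ne']

lemma rpow_sub_two {r : ℝ} (hr : r ≠ 0) (p : ℝ) : r ^ (p - 2) = r ^ p / r ^ 2 :=
  mod_cast rpow_sub_natCast hr p 2

section NormRpow

variable {E : Type*} [NormedAddCommGroup E] [InnerProductSpace ℝ E] {x : E}

lemma hasFDerivAt_norm_rpow_of_ne_zero (hx : x ≠ 0) (p : ℝ) :
    HasFDerivAt (fun z : E ↦ ‖z‖ ^ p) ((p * ‖x‖ ^ (p - 2)) • innerSL ℝ x) x := by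
  have hsq (q : ℝ) (z : E) : (‖z‖ ^ 2) ^ q = ‖z‖ ^ (2 * q) := by
    rw [← rpow_natCast_mul (norm_nonneg z), Nat.cast_ofNat]
  have h := (hasStrictFDerivAt_norm_sq x).hasFDerivAt.rpow_const (p := p / 2)
    (Or.inl (pow_ne_zero 2 (norm_ne_zero_iff.2 hx)))
  simp only [hsq, mul_sub, mul_div_cancel₀ p (two_ne_zero' ℝ), mul_one] at h
  convert h using 1
  module

lemma iteratedFDeriv_two_norm_rpow (hx : x ≠ 0) (p : ℝ) (u w : E) :
    iteratedFDeriv ℝ 2 (fun z : E ↦ ‖z‖ ^ p) x ![u, w] =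
      p * ‖x‖ ^ (p - 2) * ⟪u, w⟫ + p * (p - 2) * ‖x‖ ^ (p - 4) * (⟪x, u⟫ * ⟪x, w⟫) := by
  have hfderiv : fderiv ℝ (fun z : E ↦ ‖z‖ ^ p) =ᶠ[𝓝 x]
      fun z ↦ (p * ‖z‖ ^ (p - 2)) • innerSL ℝ z := by
    filter_upwards [isOpen_ne.mem_nhds hx] with z hz
    exact (hasFDerivAt_norm_rpow_of_ne_zero hz p).fderiv
  have hfderiv₂ := (((hasFDerivAt_norm_rpow_of_ne_zero hx (p - 2)).const_mul p).smul
    (innerSL ℝ (E := E)).hasFDerivAt).congr_of_eventuallyEq hfderiv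
  rw [iteratedFDeriv_two_apply, hfderiv₂.fderiv, show p - 2 - 2 = p - 4 by ring]
  simp only [Matrix.cons_val_zero, Matrix.cons_val_one, add_apply, smul_apply,
    ContinuousLinearMap.smulRight_apply, smul_eq_mul, innerSL_apply_apply]
  -- `innerSL` is conjugate-linear by type, which hides two inner products from `simp`.
  change p * ‖x‖ ^ (p - 2) * ⟪u, w⟫ + p * ((p - 2) * ‖x‖ ^ (p - 4) * ⟪x, u⟫) * ⟪x, w⟫ = _
  ring

lemma gradient_norm_rpow [CompleteSpace E] (hx : x ≠ 0) (p : ℝ) :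
    gradient (fun z : E ↦ ‖z‖ ^ p) x = (p * ‖x‖ ^ (p - 2)) • x := by
  refine HasGradientAt.gradient (hasGradientAt_iff_hasFDerivAt.2 ?_)
  rw [map_smul]
  exact hasFDerivAt_norm_rpow_of_ne_zero hx p

/-- The relative increment `(‖x + y‖ ^ 2 - ‖x‖ ^ 2) / ‖x‖ ^ 2` of the squared norm under a jump
`y`, with its numerator expanded to display the parts linear and quadratic in `y`. -/
noncomputable def relSqIncrement (x y : E) : ℝ := (2 * ⟪x, y⟫ + ‖y‖ ^ 2) / ‖x‖ ^ 2

lemma norm_add_sq_eq_mul_one_add_relSqIncrement (hx : x ≠ 0) (y : E) :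
    ‖x + y‖ ^ 2 = ‖x‖ ^ 2 * (1 + relSqIncrement x y) := by
  have hx₀ : ‖x‖ ≠ 0 := norm_ne_zero_iff.2 hx
  rw [norm_add_sq_real, relSqIncrement]
  field

lemma neg_one_le_relSqIncrement (hx : x ≠ 0) (y : E) : -1 ≤ relSqIncrement x y := by
  have : 0 ≤ 1 + relSqIncrement x y := nonneg_of_mul_nonneg_right
    (norm_add_sq_eq_mul_one_add_relSqIncrement hx y ▸ sq_nonneg _) (by positivity)
  linarith

lemma relSqIncrement_sq_le {y : E} (hx : x ≠ 0) (hy : ‖y‖ ≤ ‖x‖) :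
    relSqIncrement x y ^ 2 ≤ 9 * (‖y‖ ^ 2 / ‖x‖ ^ 2) := by
  have hx₀ : ‖x‖ ≠ 0 := norm_ne_zero_iff.2 hx
  have hnum : |2 * ⟪x, y⟫ + ‖y‖ ^ 2| ≤ 3 * (‖x‖ * ‖y‖) :=
    calc |2 * ⟪x, y⟫ + ‖y‖ ^ 2|
      _ ≤ |2 * ⟪x, y⟫| + |‖y‖ ^ 2| := abs_add_le _ _
      _ = 2 * |⟪x, y⟫| + ‖y‖ * ‖y‖ := by rw [abs_mul, abs_two, abs_sq, sq]
      _ ≤ 2 * (‖x‖ * ‖y‖) + ‖x‖ * ‖y‖ := by gcongr; exact abs_real_inner_le_norm x y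
      _ = 3 * (‖x‖ * ‖y‖) := by ring
  calc relSqIncrement x y ^ 2
    _ = |2 * ⟪x, y⟫ + ‖y‖ ^ 2| ^ 2 / (‖x‖ ^ 2) ^ 2 := by rw [relSqIncrement, div_pow, sq_abs]
    _ ≤ (3 * (‖x‖ * ‖y‖)) ^ 2 / (‖x‖ ^ 2) ^ 2 := by gcongr
    _ = 9 * (‖y‖ ^ 2 / ‖x‖ ^ 2) := by field

variable {α : ℝ}

lemma norm_add_rpow_eq_mul_one_add_relSqIncrement_rpow (hx : x ≠ 0) (y : E) :
    ‖x + y‖ ^ α = ‖x‖ ^ α * (1 + relSqIncrement x y) ^ (α / 2) := by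
  have hsq (z : E) : ‖z‖ ^ α = (‖z‖ ^ 2) ^ (α / 2) := by
    rw [← rpow_natCast_mul (norm_nonneg z), Nat.cast_ofNat, mul_div_cancel₀ α two_ne_zero]
  have hnonneg : 0 ≤ 1 + relSqIncrement x y := by linarith [neg_one_le_relSqIncrement hx y]
  rw [hsq (x + y), hsq x, ← mul_rpow (sq_nonneg _) hnonneg,
    ← norm_add_sq_eq_mul_one_add_relSqIncrement hx]

lemma norm_add_rpow_sub_eq (hx : x ≠ 0) (y : E) :
    ‖x + y‖ ^ α - ‖x‖ ^ α - α * ‖x‖ ^ (α - 2) * ⟪x, y⟫ =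
      ‖x‖ ^ α * ((1 + relSqIncrement x y) ^ (α / 2) - (1 + α / 2 * relSqIncrement x y))
        + α / 2 * ‖x‖ ^ (α - 2) * ‖y‖ ^ 2 := by
  have hx₀ : ‖x‖ ≠ 0 := norm_ne_zero_iff.2 hx
  have hlinear : ‖x‖ ^ α * relSqIncrement x y = ‖x‖ ^ (α - 2) * (2 * ⟪x, y⟫ + ‖y‖ ^ 2) := by
    rw [relSqIncrement, rpow_sub_two hx₀]
    ring
  rw [norm_add_rpow_eq_mul_one_add_relSqIncrement_rpow hx]
  linear_combination α / 2 * hlinear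

lemma norm_add_rpow_sub_le (hx : x ≠ 0) (y : E) (hα₀ : 0 ≤ α) (hα₂ : α ≤ 2) :
    ‖x + y‖ ^ α - ‖x‖ ^ α - α * ‖x‖ ^ (α - 2) * ⟪x, y⟫ ≤ α / 2 * ‖x‖ ^ (α - 2) * ‖y‖ ^ 2 := by
  have hbernoulli : (1 + relSqIncrement x y) ^ (α / 2) ≤ 1 + α / 2 * relSqIncrement x y :=
    rpow_one_add_le_one_add_mul_self (neg_one_le_relSqIncrement hx y) (by linarith) (by linarith)
  rw [norm_add_rpow_sub_eq hx, add_le_iff_nonpos_left]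
  exact mul_nonpos_of_nonneg_of_nonpos (by positivity) (sub_nonpos.2 hbernoulli)

lemma neg_mul_sq_le_norm_add_rpow_sub {y : E} (hx : x ≠ 0) (hy : ‖y‖ ≤ ‖x‖)
    (hα₀ : 0 ≤ α) (hα₂ : α ≤ 2) :
    -(9 * ‖x‖ ^ (α - 2) * ‖y‖ ^ 2) ≤
      ‖x + y‖ ^ α - ‖x‖ ^ α - α * ‖x‖ ^ (α - 2) * ⟪x, y⟫ := by
  have hbernoulli := one_add_mul_sub_mul_sq_le_one_add_rpow
    (neg_one_le_relSqIncrement hx y) (p := α / 2) (by linarith) (by linarith)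
  have hquadratic : (1 - α / 2) * relSqIncrement x y ^ 2 ≤ 9 * (‖y‖ ^ 2 / ‖x‖ ^ 2) :=
    (mul_le_of_le_one_left (sq_nonneg _) (by linarith)).trans (relSqIncrement_sq_le hx hy)
  calc -(9 * ‖x‖ ^ (α - 2) * ‖y‖ ^ 2)
    _ = ‖x‖ ^ α * -(9 * (‖y‖ ^ 2 / ‖x‖ ^ 2)) := by
      rw [rpow_sub_two (norm_ne_zero_iff.2 hx)]
      ring
    _ ≤ ‖x‖ ^ α * ((1 + relSqIncrement x y) ^ (α / 2) - (1 + α / 2 * relSqIncrement x y)) := by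
      gcongr
      linarith
    _ ≤ ‖x + y‖ ^ α - ‖x‖ ^ α - α * ‖x‖ ^ (α - 2) * ⟪x, y⟫ := by
      rw [norm_add_rpow_sub_eq hx, le_add_iff_nonneg_right]
      positivity

end NormRpow

section PowerOutsideBall

variable {E : Type*} [NormedAddCommGroup E] {v : E → ℝ} {x : E} {g : ℝ → ℝ} {α r0 : ℝ}

lemma eventuallyEq_norm_rpow (hv : ∀ z, r0 ≤ ‖z‖ → v z = ‖z‖ ^ α) (hx : r0 < ‖x‖) :
    v =ᶠ[𝓝 x] fun z ↦ ‖z‖ ^ α := by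
  filter_upwards [continuous_norm.continuousAt.eventually (lt_mem_nhds hx)] with z hz
  exact hv z hz.le

lemma bddBelow_range_of_monotoneOn_norm (hg : MonotoneOn g (Set.Ici 0)) (hvg : ∀ z, v z = g ‖z‖) :
    BddBelow (Set.range v) := by
  refine ⟨g 0, Set.forall_mem_range.2 fun z ↦ ?_⟩
  rw [hvg]
  exact hg Set.self_mem_Ici (norm_nonneg z) (norm_nonneg z)

lemma le_max_rpow_of_monotoneOn_norm [NormedSpace ℝ E] [Nontrivial E]
    (hg : MonotoneOn g (Set.Ici 0)) (hvg : ∀ z, v z = g ‖z‖)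
    (hv : ∀ z, r0 ≤ ‖z‖ → v z = ‖z‖ ^ α) (z : E) : v z ≤ max ‖z‖ r0 ^ α := by
  obtain ⟨z₀, hz₀⟩ := exists_norm_eq E ((norm_nonneg z).trans (le_max_left ‖z‖ r0))
  calc v z = g ‖z‖ := hvg z
    _ ≤ g ‖z₀‖ := hg (norm_nonneg z) (norm_nonneg z₀) (hz₀ ▸ le_max_left _ _)
    _ = max ‖z‖ r0 ^ α := by rw [← hvg, hv z₀ (hz₀ ▸ le_max_right _ _), hz₀]

end PowerOutsideBall

section CompensatedIncrement

variable {E : Type*} [NormedAddCommGroup E] [InnerProductSpace ℝ E] [CompleteSpace E]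
  {v : E → ℝ} {x y : E} {α r0 : ℝ}

/-- The integrand of the jump part of `ℒ v x`: the increment of `v` under a jump `y`, with its
first-order part subtracted for the jumps of norm less than `1` only. -/
noncomputable def compensatedIncrement (v : E → ℝ) (x y : E) : ℝ :=
  v (x + y) - v x - (Metric.ball (0 : E) 1).indicator (fun z ↦ ⟪z, gradient v x⟫) y

lemma measurable_compensatedIncrement [MeasurableSpace E] [BorelSpace E] (hv : Measurable v)
    (x : E) : Measurable (compensatedIncrement v x) :=
  ((hv.comp (measurable_const_add x)).sub_const _).sub <|
    Measurable.indicator (by fun_prop) measurableSet_ball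

lemma compensatedIncrement_of_notMem_ball (hy : y ∉ Metric.ball (0 : E) 1) :
    compensatedIncrement v x y = v (x + y) - v x := by
  rw [compensatedIncrement, Set.indicator_of_notMem hy, sub_zero]

lemma compensatedIncrement_of_mem_ball (hr0 : 0 < r0) (hx : r0 + 1 ≤ ‖x‖)
    (hv : ∀ z, r0 ≤ ‖z‖ → v z = ‖z‖ ^ α) (hy : y ∈ Metric.ball (0 : E) 1) :
    compensatedIncrement v x y = ‖x + y‖ ^ α - ‖x‖ ^ α - α * ‖x‖ ^ (α - 2) * ⟪x, y⟫ := by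
  have hxy : r0 ≤ ‖x + y‖ := by
    linarith [norm_sub_le_norm_add x y, mem_ball_zero_iff.1 hy]
  have hgrad : gradient v x = (α * ‖x‖ ^ (α - 2)) • x :=
    (eventuallyEq_norm_rpow hv (by linarith)).gradient_eq.trans
      (gradient_norm_rpow (norm_pos_iff.1 (by linarith)) α)
  rw [compensatedIncrement, Set.indicator_of_mem hy, hgrad, inner_smul_right, real_inner_comm,
    hv _ hxy, hv x (by linarith)]

variable [MeasurableSpace E] [BorelSpace E] {ν : Measure E}

lemma integrableOn_ball_compensatedIncrement (hα₀ : 0 ≤ α) (hα₂ : α ≤ 2) (hr0 : 0 < r0)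
    (hx : r0 + 1 ≤ ‖x‖) (hv_meas : Measurable v) (hv : ∀ z, r0 ≤ ‖z‖ → v z = ‖z‖ ^ α)
    (hν : IntegrableOn (fun y ↦ ‖y‖ ^ 2) (Metric.ball (0 : E) 1) ν) :
    IntegrableOn (compensatedIncrement v x) (Metric.ball (0 : E) 1) ν := by
  have hx₀ : x ≠ 0 := norm_pos_iff.1 (by linarith)
  refine integrable_of_le_of_le (measurable_compensatedIncrement hv_meas x).aestronglyMeasurable
    (ae_restrict_of_forall_mem measurableSet_ball fun y hy ↦ ?lower)
    (ae_restrict_of_forall_mem measurableSet_ball fun y hy ↦ ?upper)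
    (hν.const_mul (9 * ‖x‖ ^ (α - 2))).neg (hν.const_mul (α / 2 * ‖x‖ ^ (α - 2)))
  case lower =>
    rw [compensatedIncrement_of_mem_ball hr0 hx hv hy]
    exact neg_mul_sq_le_norm_add_rpow_sub hx₀ (by linarith [mem_ball_zero_iff.1 hy]) hα₀ hα₂
  case upper =>
    rw [compensatedIncrement_of_mem_ball hr0 hx hv hy]
    exact norm_add_rpow_sub_le hx₀ y hα₀ hα₂

lemma setIntegral_ball_compensatedIncrement_le (hα₀ : 0 ≤ α) (hα₂ : α ≤ 2) (hr0 : 0 < r0)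
    (hx : r0 + 1 ≤ ‖x‖) (hv_meas : Measurable v) (hv : ∀ z, r0 ≤ ‖z‖ → v z = ‖z‖ ^ α)
    (hν : IntegrableOn (fun y ↦ ‖y‖ ^ 2) (Metric.ball (0 : E) 1) ν) :
    ∫ y in Metric.ball (0 : E) 1, compensatedIncrement v x y ∂ν ≤
      α / 2 * (‖x‖ - 1) ^ (α - 2) * ∫ y in Metric.ball (0 : E) 1, ‖y‖ ^ 2 ∂ν := by
  have hint := integrableOn_ball_compensatedIncrement hα₀ hα₂ hr0 hx hv_meas hv hν
  rw [← integral_const_mul]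
  refine setIntegral_mono_on hint (hν.const_mul _) measurableSet_ball fun y hy ↦ ?_
  calc compensatedIncrement v x y
    _ ≤ α / 2 * ‖x‖ ^ (α - 2) * ‖y‖ ^ 2 := by
      rw [compensatedIncrement_of_mem_ball hr0 hx hv hy]
      exact norm_add_rpow_sub_le (norm_pos_iff.1 (by linarith)) y hα₀ hα₂
    _ ≤ α / 2 * (‖x‖ - 1) ^ (α - 2) * ‖y‖ ^ 2 := by
      gcongr ?_ * ?_ * _
      exact rpow_le_rpow_of_nonpos (by linarith) (by linarith) (by linarith)

variable {u : E → ℝ}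

lemma integrableOn_compl_ball_compensatedIncrement (hν : ν (Metric.ball (0 : E) 1)ᶜ < ⊤)
    (hu : IntegrableOn (fun y ↦ u (y + x)) (Metric.ball (0 : E) 1)ᶜ ν)
    (hv_meas : Measurable v) (hv_bdd : BddBelow (Set.range v)) (hvu : v ≤ u) :
    IntegrableOn (compensatedIncrement v x) (Metric.ball (0 : E) 1)ᶜ ν := by
  obtain ⟨m, hm⟩ := hv_bdd
  have hconst (C : ℝ) : IntegrableOn (fun _ ↦ C) (Metric.ball (0 : E) 1)ᶜ ν :=
    integrableOn_const hν.ne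
  refine integrable_of_le_of_le (measurable_compensatedIncrement hv_meas x).aestronglyMeasurable
    (ae_restrict_of_forall_mem measurableSet_ball.compl fun y hy ↦ ?lower)
    (ae_restrict_of_forall_mem measurableSet_ball.compl fun y hy ↦ ?upper)
    (hconst (m - v x)) (hu.sub (hconst (v x)))
  case lower =>
    rw [compensatedIncrement_of_notMem_ball hy]
    exact sub_le_sub_right (hm (Set.mem_range_self _)) _
  case upper =>
    rw [compensatedIncrement_of_notMem_ball hy, add_comm x y]
    exact sub_le_sub_right (hvu _) _

lemma setIntegral_compl_ball_compensatedIncrement_le (hν : ν (Metric.ball (0 : E) 1)ᶜ < ⊤)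
    (hu : IntegrableOn (fun y ↦ u (y + x)) (Metric.ball (0 : E) 1)ᶜ ν)
    (hv_meas : Measurable v) (hv_bdd : BddBelow (Set.range v)) (hvu : v ≤ u) :
    ∫ y in (Metric.ball (0 : E) 1)ᶜ, compensatedIncrement v x y ∂ν ≤
      ∫ y in (Metric.ball (0 : E) 1)ᶜ, (u (y + x) - v x) ∂ν := by
  refine setIntegral_mono_on
    (integrableOn_compl_ball_compensatedIncrement hν hu hv_meas hv_bdd hvu)
    (hu.sub (integrableOn_const hν.ne)) measurableSet_ball.compl fun y hy ↦ ?_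
  rw [compensatedIncrement_of_notMem_ball hy, add_comm x y]
  exact sub_le_sub_right (hvu _) _

end CompensatedIncrement

section Generator

variable {d : ℕ} {x : EuclideanSpace ℝ (Fin d)} {v : EuclideanSpace ℝ (Fin d) → ℝ} {α : ℝ}

lemma sum_mul_iteratedFDeriv_two_norm_rpow (hx : x ≠ 0) (c : Matrix (Fin d) (Fin d) ℝ) :
    ∑ i, ∑ j, c i j * iteratedFDeriv ℝ 2 (fun z : EuclideanSpace ℝ (Fin d) ↦ ‖z‖ ^ α) x
        ![EuclideanSpace.single i 1, EuclideanSpace.single j 1] =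
      α * ‖x‖ ^ (α - 2) * c.trace
        + α * (α - 2) * ‖x‖ ^ (α - 4) * ∑ i, ∑ j, c i j * x i * x j := by
  have htrace : c.trace = ∑ i, ∑ j, c i j * if j = i then (1 : ℝ) else 0 := by
    simp [Matrix.trace]
  simp only [htrace, Finset.mul_sum, ← Finset.sum_add_distrib]
  refine Finset.sum_congr rfl fun i _ ↦ Finset.sum_congr rfl fun j _ ↦ ?_
  rw [iteratedFDeriv_two_norm_rpow hx]
  simp only [EuclideanSpace.inner_single_right, PiLp.single_apply, conj_trivial, one_mul]
  ring

lemma genL_eq_of_eventuallyEq_norm_rpow (hx : x ≠ 0) (hv : v =ᶠ[𝓝 x] fun z ↦ ‖z‖ ^ α)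
    (a : ℝ) (b : EuclideanSpace ℝ (Fin d)) (c : Matrix (Fin d) (Fin d) ℝ)
    (ν : Measure (EuclideanSpace ℝ (Fin d))) :
    genL d a b c ν v x =
      -a * ‖x‖ ^ α
        + α * ‖x‖ ^ α *
            ((1 / 2) * ‖x‖ ^ (-2 : ℝ) * c.trace
              - (1 - α / 2) * (‖x‖ ^ (-4 : ℝ) * ∑ i, ∑ j, c i j * x i * x j)
              + ‖x‖ ^ (-2 : ℝ) * ⟪x, b⟫)
        + ∫ y, compensatedIncrement v x y ∂ν := by
  have hsplit (q : ℝ) : ‖x‖ ^ (α - q) = ‖x‖ ^ α * ‖x‖ ^ (-q) := by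
    rw [sub_eq_add_neg, rpow_add (norm_pos_iff.2 hx)]
  have hgrad : ⟪b, gradient v x⟫ = α * ‖x‖ ^ (α - 2) * ⟪x, b⟫ := by
    rw [hv.gradient_eq, gradient_norm_rpow hx, inner_smul_right, real_inner_comm]
  simp only [genL, compensatedIncrement, hgrad, (hv.iteratedFDeriv ℝ 2).eq_of_nhds,
    sum_mul_iteratedFDeriv_two_norm_rpow hx, hv.eq_of_nhds, hsplit]
  ring

end Generator

theorem stmt_5_general {d : ℕ} {α r0 : ℝ} (hα : 0 ≤ α) (hα2 : α ≤ 2) (hr0 : 0 < r0)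
    {x : EuclideanSpace ℝ (Fin d)} (hx : r0 + 1 ≤ ‖x‖)
    (a : ℝ) (b : EuclideanSpace ℝ (Fin d)) (c : Matrix (Fin d) (Fin d) ℝ)
    {ν : Measure (EuclideanSpace ℝ (Fin d))}
    (hνfin : ν ((Metric.ball (0 : EuclideanSpace ℝ (Fin d)) 1)ᶜ) < ⊤)
    (hνsq : IntegrableOn (fun y => ‖y‖ ^ 2)
      (Metric.ball (0 : EuclideanSpace ℝ (Fin d)) 1) ν)
    (hνbig : IntegrableOn (fun y => (max ‖y + x‖ r0) ^ α)
      ((Metric.ball (0 : EuclideanSpace ℝ (Fin d)) 1)ᶜ) ν)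
    {v : EuclideanSpace ℝ (Fin d) → ℝ} (hv : Measurable v) (hvbdd : BddBelow (Set.range v))
    (hvle : ∀ z, v z ≤ (max ‖z‖ r0) ^ α)
    (hvpow : ∀ z : EuclideanSpace ℝ (Fin d), r0 ≤ ‖z‖ → v z = ‖z‖ ^ α) :
    Integrable (fun y => v (x + y) - v x
      - Set.indicator (Metric.ball (0 : EuclideanSpace ℝ (Fin d)) 1)
          (fun y => ⟪y, gradient v x⟫) y) ν ∧
    genL d a b c ν v x ≤
      -a * ‖x‖ ^ α
        + α * ‖x‖ ^ α *
            ((1 / 2) * ‖x‖ ^ (-2 : ℝ) * c.trace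
              - (1 - α / 2) * (‖x‖ ^ (-4 : ℝ) * ∑ i, ∑ j, c i j * x i * x j)
              + ‖x‖ ^ (-2 : ℝ) * ⟪x, b⟫)
        + (α / 2) * (‖x‖ - 1) ^ (α - 2) *
            ∫ y in Metric.ball (0 : EuclideanSpace ℝ (Fin d)) 1, ‖y‖ ^ 2 ∂ν
        + ∫ y in (Metric.ball (0 : EuclideanSpace ℝ (Fin d)) 1)ᶜ,
            ((max ‖y + x‖ r0) ^ α - ‖x‖ ^ α) ∂ν := by
  have hv_near : v =ᶠ[𝓝 x] fun z ↦ ‖z‖ ^ α := eventuallyEq_norm_rpow hvpow (by linarith)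
  have hint : Integrable (compensatedIncrement v x) ν := by
    rw [← integrableOn_univ, ← Set.union_compl_self (Metric.ball 0 1)]
    exact (integrableOn_ball_compensatedIncrement hα hα2 hr0 hx hv hvpow hνsq).union
      (integrableOn_compl_ball_compensatedIncrement hνfin hνbig hv hvbdd hvle)
  have hsmall := setIntegral_ball_compensatedIncrement_le hα hα2 hr0 hx hv hvpow hνsq
  have hlarge := setIntegral_compl_ball_compensatedIncrement_le hνfin hνbig hv hvbdd hvle
  rw [hv_near.eq_of_nhds] at hlarge
  refine ⟨hint, ?_⟩
  rw [genL_eq_of_eventuallyEq_norm_rpow (norm_pos_iff.1 (by linarith)) hv_near,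
    ← integral_add_compl measurableSet_ball hint, ← add_assoc]
  gcongr

theorem stmt_5 (d : ℕ) (hd : 1 ≤ d) (α r0 : ℝ) (hα : 0 < α) (hα2 : α ≤ 2)
    (hr0 : 1 < r0)
    (x : EuclideanSpace ℝ (Fin d)) (hx : r0 + 1 ≤ ‖x‖)
    (a : ℝ) (ha : 0 ≤ a) (b : EuclideanSpace ℝ (Fin d))
    (c : Matrix (Fin d) (Fin d) ℝ) (hc : c.IsSymm)
    (ν : Measure (EuclideanSpace ℝ (Fin d)))
    (hν0 : ν {0} = 0)
    (hνfin : ν ((Metric.ball (0 : EuclideanSpace ℝ (Fin d)) 1)ᶜ) < ⊤)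
    (hνsq : IntegrableOn (fun y => ‖y‖ ^ 2)
      (Metric.ball (0 : EuclideanSpace ℝ (Fin d)) 1) ν)
    (hνbig : IntegrableOn (fun y => (max ‖y + x‖ r0) ^ α)
      ((Metric.ball (0 : EuclideanSpace ℝ (Fin d)) 1)ᶜ) ν)
    (v : EuclideanSpace ℝ (Fin d) → ℝ) (hv : ContDiff ℝ 2 v)
    (g : ℝ → ℝ) (hg : MonotoneOn g (Set.Ici 0)) (hvg : ∀ z, v z = g ‖z‖)
    (hvpow : ∀ z : EuclideanSpace ℝ (Fin d), r0 ≤ ‖z‖ → v z = ‖z‖ ^ α) :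
    Integrable (fun y => v (x + y) - v x
      - Set.indicator (Metric.ball (0 : EuclideanSpace ℝ (Fin d)) 1)
          (fun y => ⟪y, gradient v x⟫) y) ν ∧
    genL d a b c ν v x ≤
      -a * ‖x‖ ^ α
        + α * ‖x‖ ^ α *
            ((1 / 2) * ‖x‖ ^ (-2 : ℝ) * c.trace
              - (1 - α / 2) * (‖x‖ ^ (-4 : ℝ) * ∑ i, ∑ j, c i j * x i * x j)
              + ‖x‖ ^ (-2 : ℝ) * ⟪x, b⟫)
        + (α / 2) * (‖x‖ - 1) ^ (α - 2) *
            ∫ y in Metric.ball (0 : EuclideanSpace ℝ (Fin d)) 1, ‖y‖ ^ 2 ∂ν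
        + ∫ y in (Metric.ball (0 : EuclideanSpace ℝ (Fin d)) 1)ᶜ,
            ((max ‖y + x‖ r0) ^ α - ‖x‖ ^ α) ∂ν := by
  have : Nontrivial (EuclideanSpace ℝ (Fin d)) :=
    nontrivial_of_ne x 0 (norm_pos_iff.1 (by linarith))
  exact stmt_5_general hα.le hα2 (by linarith) hx a b c hνfin hνsq hνbig hv.continuous.measurable
    (bddBelow_range_of_monotoneOn_norm hg hvg)
    (le_max_rpow_of_monotoneOn_norm hg hvg hvpow) hvpow
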